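/- Let G be a finite simple 2K2-free graph with maximum degree Δ(G) ≥ 3 such that χ(G) > max{ω(G), Δ(G) − 1}. Then χ(G) = Δ(G) and ω(G) < Δ(G). -/

import Mathlib

/-- A simple graph is `2K2`-free if it has no four distinct vertices `a b c d` with
`ab` and `cd` edges and none of `ac, ad, bc, bd` an edge. -/
def TwoK2Free {V : Type*} (G : SimpleGraph V) : Prop :=
  ¬ ∃ a b c d : V, a ≠ b ∧ a ≠ c ∧ a ≠ d ∧ b ≠ c ∧ b ≠ d ∧ c ≠ d ∧
      G.Adj a b ∧ G.Adj c d ∧ ¬ G.Adj a c ∧ ¬ G.Adj a d ∧ ¬ G.Adj b c ∧ ¬ G.Adj b d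

/-- `c` is a proper colouring on the vertices of `S`. -/
def ProperOn {V : Type*} (G : SimpleGraph V) {k : ℕ} (S : Finset V) (c : V → Fin k) : Prop :=
  ∀ a ∈ S, ∀ b ∈ S, G.Adj a b → c a ≠ c b

theorem properOn_step {V : Type*} [Fintype V] [DecidableEq V] (G : SimpleGraph V)
    [DecidableRel G.Adj] {k : ℕ} (S : Finset V) (c : V → Fin k) (hc : ProperOn G S c) (u : V)
    (hu : u ∉ S) (h : ((G.neighborFinset u ∩ S).image c).card < k) :
    ∃ c' : V → Fin k, ProperOn G (insert u S) c' ∧ ∀ s ∈ S, c' s = c s := by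
  obtain ⟨q, hq⟩ : ∃ q, q ∉ (G.neighborFinset u ∩ S).image c := by
    by_contra! hcon
    have : (G.neighborFinset u ∩ S).image c = Finset.univ := Finset.eq_univ_iff_forall.2 hcon
    rw [this] at h
    simp at h
  have hq' : ∀ s ∈ S, G.Adj u s → c s ≠ q := by
    intro s hs hus he
    exact hq (Finset.mem_image.2 ⟨s, by simp [hs, hus], he⟩)
  have hne : ∀ s ∈ S, s ≠ u := fun s hs e => hu (e ▸ hs)
  refine ⟨Function.update c u q, ?_, ?_⟩
  · intro a ha b hb hab
    rcases Finset.mem_insert.1 ha with rfl | haS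
    · rcases Finset.mem_insert.1 hb with rfl | hb
      · exact absurd hab (G.loopless.irrefl _)
      · rw [Function.update_self, Function.update_of_ne (hne b hb)]
        exact (hq' b hb hab).symm
    · rcases Finset.mem_insert.1 hb with rfl | hb
      · rw [Function.update_self, Function.update_of_ne (hne a haS)]
        exact hq' a haS hab.symm
      · rw [Function.update_of_ne (hne a haS), Function.update_of_ne (hne b hb)]
        exact hc a haS b hb hab
  · intro s hs
    exact Function.update_of_ne (hne s hs) _ _

theorem properOn_extend {V : Type*} [Fintype V] [DecidableEq V] (G : SimpleGraph V)
    [DecidableRel G.Adj] {k : ℕ} (hdeg : ∀ v, G.degree v ≤ k) (S : Finset V) (c : V → Fin k)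
    (hc : ProperOn G S c) (T : Finset V)
    (hT : ∀ t ∈ T, ∃ w, G.Adj t w ∧ w ∉ S ∧ w ∉ T) :
    ∃ c' : V → Fin k, ProperOn G (S ∪ T) c' ∧ ∀ s ∈ S, c' s = c s := by
  induction T using Finset.induction_on with
  | empty => exact ⟨c, by simpa using hc, fun _ _ => rfl⟩
  | insert u T huT ih =>
    obtain ⟨c1, h1, h1'⟩ := ih (fun t ht => by
      obtain ⟨w, hw, hwS, hwT⟩ := hT t (Finset.mem_insert_of_mem ht)
      exact ⟨w, hw, hwS, fun h => hwT (Finset.mem_insert_of_mem h)⟩)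
    rw [Finset.union_insert]
    by_cases huS : u ∈ S ∪ T
    · rw [Finset.insert_eq_of_mem huS]
      exact ⟨c1, h1, h1'⟩
    · obtain ⟨w, hw, hwS, hwT⟩ := hT u (Finset.mem_insert_self _ _)
      have hlt : ((G.neighborFinset u ∩ (S ∪ T)).image c1).card < k := by
        refine lt_of_le_of_lt Finset.card_image_le (lt_of_lt_of_le ?_ (hdeg u))
        rw [← G.card_neighborFinset_eq_degree]
        apply Finset.card_lt_card
        refine ⟨Finset.inter_subset_left, fun h => ?_⟩
        have := h ((G.mem_neighborFinset u w).2 hw)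
        simp only [Finset.mem_inter, Finset.mem_union] at this
        rcases this.2 with h | h
        · exact hwS h
        · exact hwT (Finset.mem_insert_of_mem h)
      obtain ⟨c2, h2, h2'⟩ := properOn_step G (S ∪ T) c1 h1 u huS hlt
      exact ⟨c2, h2, fun s hs => (h2' s (Finset.mem_union_left _ hs)).trans (h1' s hs)⟩

theorem greedy_colorable {V : Type*} [Fintype V] [DecidableEq V] (G : SimpleGraph V)
    [DecidableRel G.Adj] {k : ℕ} (hdeg : ∀ v, G.degree v < k) (hk : 0 < k) : G.Colorable k := by
  have key : ∀ S : Finset V, ∃ c : V → Fin k, ProperOn G S c := by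
    intro S
    induction S using Finset.induction_on with
    | empty => exact ⟨fun _ => ⟨0, hk⟩, by intro a ha; simp at ha⟩
    | insert u S hu ih =>
      obtain ⟨c, hc⟩ := ih
      obtain ⟨c', h, -⟩ := properOn_step G S c hc u hu (by
        refine lt_of_le_of_lt Finset.card_image_le (lt_of_le_of_lt ?_ (hdeg u))
        rw [← G.card_neighborFinset_eq_degree]
        exact Finset.card_le_card Finset.inter_subset_left)
      exact ⟨c', h⟩
  obtain ⟨c, hc⟩ := key Finset.univ
  exact ⟨SimpleGraph.Coloring.mk c (fun {a b} hab => hc a (by simp) b (by simp) hab)⟩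

theorem brooks_twoK2Free {V : Type*} [Fintype V] [DecidableEq V] (G : SimpleGraph V)
    [DecidableRel G.Adj] {k : ℕ} (hfree : TwoK2Free G) (hdeg : ∀ v, G.degree v ≤ k) (hk : 3 ≤ k)
    (hcl : G.CliqueFree (k + 1)) : G.Colorable k := by
  have key : ∀ H : Finset V, ∃ c : V → Fin k, ProperOn G H c := by
    intro H
    induction H using Finset.strongInduction with
    | H H ih =>
    by_cases hlow : ∃ u ∈ H, (G.neighborFinset u ∩ H).card < k
    · obtain ⟨u, hu, hlt⟩ := hlow
      obtain ⟨c, hc⟩ := ih (H.erase u) (Finset.erase_ssubset hu)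
      obtain ⟨c', h, -⟩ := properOn_step G (H.erase u) c hc u (by simp) (by
        refine lt_of_le_of_lt Finset.card_image_le (lt_of_le_of_lt ?_ hlt)
        exact Finset.card_le_card (Finset.inter_subset_inter_left (Finset.erase_subset _ _)))
      rw [Finset.insert_erase hu] at h
      exact ⟨c', h⟩
    push Not at hlow
    have hcard : ∀ u ∈ H, (G.neighborFinset u).card = k := by
      intro u hu
      have h1 := hlow u hu
      have h2 := Finset.card_le_card
        (Finset.inter_subset_left : G.neighborFinset u ∩ H ⊆ G.neighborFinset u)
      have h3 := hdeg u
      rw [← G.card_neighborFinset_eq_degree] at h3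
      omega
    have hsub : ∀ u ∈ H, ∀ w, G.Adj u w → w ∈ H := by
      intro u hu w hw
      have h := Finset.eq_of_subset_of_card_le
        (Finset.inter_subset_left : G.neighborFinset u ∩ H ⊆ G.neighborFinset u)
        (by rw [hcard u hu]; exact hlow u hu)
      have hw' := (G.mem_neighborFinset u w).2 hw
      rw [← h] at hw'
      exact (Finset.mem_inter.1 hw').2
    rcases H.eq_empty_or_nonempty with rfl | ⟨v, hv⟩
    · exact ⟨fun _ => ⟨0, by omega⟩, by intro a ha; simp at ha⟩
    -- two nonadjacent neighbours of v
    obtain ⟨x, y, hvx, hvy, hxy, hnxy⟩ :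
        ∃ x y, G.Adj v x ∧ G.Adj v y ∧ x ≠ y ∧ ¬ G.Adj x y := by
      by_contra! hcon
      apply hcl (insert v (G.neighborFinset v))
      constructor
      · intro a ha b hb hab
        simp only [Finset.coe_insert, Set.mem_insert_iff, Finset.mem_coe,
          SimpleGraph.mem_neighborFinset] at ha hb
        rcases ha with rfl | ha <;> rcases hb with rfl | hb
        · exact absurd rfl hab
        · exact hb
        · exact ha.symm
        · exact hcon a b ha hb hab
      · rw [Finset.card_insert_of_notMem (by simp), hcard v hv]
    -- every vertex of H has a neighbour outside any given pair
    have hthird : ∀ u ∈ H, ∃ w, G.Adj u w ∧ w ≠ x ∧ w ≠ y := by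
      intro u hu
      obtain ⟨w, hw, hw'⟩ := Finset.exists_mem_notMem_of_card_lt_card
        (s := ({x, y} : Finset V)) (t := G.neighborFinset u)
        (lt_of_le_of_lt Finset.card_le_two (by rw [hcard u hu]; omega))
      simp only [Finset.mem_insert, Finset.mem_singleton, not_or] at hw'
      exact ⟨w, (G.mem_neighborFinset u w).1 hw, hw'.1, hw'.2⟩
    obtain ⟨a, hva, hax, hay⟩ := hthird v hv
    let A : Finset V := (G.neighborFinset v).filter (fun w => w ≠ x ∧ w ≠ y)
    have hA : ∀ w, w ∈ A ↔ G.Adj v w ∧ w ≠ x ∧ w ≠ y := by intro w; simp [A]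
    let B : Finset V := H.filter (fun w => w ≠ v ∧ ¬ G.Adj v w)
    have hB : ∀ w, w ∈ B ↔ w ∈ H ∧ w ≠ v ∧ ¬ G.Adj v w := by intro w; simp [B]
    let T1 : Finset V := B.filter (fun w => ∀ z ∈ A, ¬ G.Adj w z)
    have hT1 : ∀ w, w ∈ T1 ↔ w ∈ B ∧ ∀ z ∈ A, ¬ G.Adj w z := by intro w; simp [T1]
    have hvxne := hvx.ne
    have hvyne := hvy.ne
    let c0 : V → Fin k := fun _ => ⟨0, by omega⟩
    have h0 : ProperOn G {x, y} c0 := by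
      intro p hp q hq hpq
      simp only [Finset.mem_insert, Finset.mem_singleton] at hp hq
      exfalso
      rcases hp with rfl | rfl <;> rcases hq with rfl | rfl
      · exact hpq.ne rfl
      · exact hnxy hpq
      · exact hnxy hpq.symm
      · exact hpq.ne rfl
    obtain ⟨c1, h1, h1'⟩ := properOn_extend G hdeg {x, y} c0 h0 T1 (by
      intro b hb
      obtain ⟨hbB, hbA⟩ := (hT1 b).1 hb
      obtain ⟨hbH, hbv, hnb⟩ := (hB b).1 hbB
      obtain ⟨w, hbw, hwx, hwy⟩ := hthird b hbH
      refine ⟨w, hbw, by simp [hwx, hwy], fun hwT => ?_⟩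
      obtain ⟨hwB, hwA⟩ := (hT1 w).1 hwT
      obtain ⟨hwH, hwv, hnw⟩ := (hB w).1 hwB
      have haA := (hA a).2 ⟨hva, hax, hay⟩
      have e1 := hbA a haA
      have e2 := hwA a haA
      refine hfree ⟨v, a, b, w, hva.ne, hbv.symm, hwv.symm, ?_, ?_, hbw.ne, hva, hbw, hnb, hnw,
        fun h => e1 h.symm, fun h => e2 h.symm⟩
      · rintro rfl; exact hnb hva
      · rintro rfl; exact hnw hva)
    obtain ⟨c2, h2, h2'⟩ := properOn_extend G hdeg ({x, y} ∪ T1) c1 h1 (B \ T1) (by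
      intro b hb
      obtain ⟨hbB, hbT⟩ := Finset.mem_sdiff.1 hb
      have : ∃ z ∈ A, G.Adj b z := by
        by_contra! hcon
        exact hbT ((hT1 b).2 ⟨hbB, hcon⟩)
      obtain ⟨z, hz, hbz⟩ := this
      have hz' := (hA z).1 hz
      have hzB : z ∉ B := fun h => ((hB z).1 h).2.2 hz'.1
      refine ⟨z, hbz, ?_, fun h => hzB (Finset.mem_sdiff.1 h).1⟩
      simp only [Finset.mem_union, Finset.mem_insert, Finset.mem_singleton, not_or]
      exact ⟨hz'.2, fun h => hzB ((hT1 z).1 h).1⟩)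
    have hvB : v ∉ B := fun h => ((hB v).1 h).2.1 rfl
    have hvT1 : v ∉ T1 := fun h => hvB ((hT1 v).1 h).1
    have hvA : v ∉ A := fun h => ((hA v).1 h).1.ne rfl
    have hvS : v ∉ ({x, y} ∪ T1) ∪ (B \ T1) := by
      simp only [Finset.mem_union, Finset.mem_insert, Finset.mem_singleton, not_or,
        Finset.mem_sdiff]
      exact ⟨⟨⟨hvxne, hvyne⟩, hvT1⟩, fun h => hvB h.1⟩
    obtain ⟨c3, h3, h3'⟩ := properOn_extend G hdeg (({x, y} ∪ T1) ∪ (B \ T1)) c2 h2 A (by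
      intro z hz
      exact ⟨v, ((hA z).1 hz).1.symm, hvS, hvA⟩)
    have hcol : c3 x = c3 y := by
      rw [h3' x (by simp), h3' y (by simp), h2' x (by simp), h2' y (by simp), h1' x (by simp),
        h1' y (by simp)]
    obtain ⟨c4, h4, -⟩ := properOn_step G _ c3 h3 v (by
        intro h
        rcases Finset.mem_union.1 h with h | h
        · exact hvS h
        · exact hvA h) (by
      have hsubset : (G.neighborFinset v ∩ (({x, y} ∪ T1) ∪ (B \ T1) ∪ A)).image c3 ⊆
          ((G.neighborFinset v).erase y).image c3 := by
        intro q hq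
        obtain ⟨s, hs, rfl⟩ := Finset.mem_image.1 hq
        have hs1 := (Finset.mem_inter.1 hs).1
        by_cases hsy : s = y
        · rw [hsy, ← hcol]
          exact Finset.mem_image_of_mem _ (Finset.mem_erase.2 ⟨hxy, by simpa using hvx⟩)
        · exact Finset.mem_image_of_mem _ (Finset.mem_erase.2 ⟨hsy, hs1⟩)
      refine lt_of_le_of_lt (Finset.card_le_card hsubset) (lt_of_le_of_lt Finset.card_image_le ?_)
      rw [Finset.card_erase_of_mem (by simpa using hvy), hcard v hv]
      omega)
    have hcover : ∀ w ∈ H, w ∈ insert v (({x, y} ∪ T1) ∪ (B \ T1) ∪ A) := by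
      intro w hw
      simp only [Finset.mem_insert, Finset.mem_union, Finset.mem_singleton, Finset.mem_sdiff,
        hA, hB]
      by_cases e1 : w ∈ T1
      · simp [e1]
      · tauto
    exact ⟨c4, fun p hp q hq hpq => h4 p (hcover p hp) q (hcover q hq) hpq⟩
  obtain ⟨c, hc⟩ := key Finset.univ
  exact ⟨SimpleGraph.Coloring.mk c (fun {a b} hab => hc a (by simp) b (by simp) hab)⟩

theorem twoK2Free_counterexample_chromatic_eq_maxDegree
    {V : Type*} [Fintype V] (G : SimpleGraph V) [DecidableRel G.Adj]
    (hfree : TwoK2Free G) (hΔ : 3 ≤ G.maxDegree)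
    (hχ : (max G.cliqueNum (G.maxDegree - 1) : ℕ) < G.chromaticNumber) :
    G.chromaticNumber = (G.maxDegree : ℕ) ∧ G.cliqueNum < G.maxDegree := by
  classical
  have hcol : G.Colorable G.maxDegree := by
    by_cases hcl : G.CliqueFree (G.maxDegree + 1)
    · exact brooks_twoK2Free G hfree G.degree_le_maxDegree hΔ hcl
    · exfalso
      unfold SimpleGraph.CliqueFree at hcl
      push Not at hcl
      obtain ⟨s, hs⟩ := hcl
      have h1 : G.maxDegree + 1 ≤ G.cliqueNum := by
        have := hs.isClique.card_le_cliqueNum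
        rwa [hs.card_eq] at this
      have h2 : G.Colorable (G.maxDegree + 1) :=
        greedy_colorable G (fun v => Nat.lt_succ_of_le (G.degree_le_maxDegree v)) (by omega)
      have h3 := lt_of_lt_of_le hχ h2.chromaticNumber_le
      have h4 : max G.cliqueNum (G.maxDegree - 1) < G.maxDegree + 1 := by exact_mod_cast h3
      omega
  have hle := hcol.chromaticNumber_le
  obtain ⟨n, hn⟩ := ENat.ne_top_iff_exists.1
    (ne_top_of_le_ne_top (ENat.natCast_ne_top _) hle)
  rw [← hn] at hle hχ ⊢
  have a1 : n ≤ G.maxDegree := by exact_mod_cast hle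
  have a2 : max G.cliqueNum (G.maxDegree - 1) < n := by exact_mod_cast hχ
  refine ⟨?_, by omega⟩
  have : n = G.maxDegree := by omega
  rw [this]
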